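/- arXiv:2009.09260 — 3 statements merged into one kernel-verified Lean document; each statement's English description precedes it below -/
import Mathlib

section
/- Let X be a compact metric space and (f_t)_{t∈ℝ} a continuous flow on X that is topologically transitive. Then the set of τ ∈ (0,∞) such that the time-τ map f_τ : X → X is topologically transitive is residual in (0,∞) (it contains a countable intersection of open dense subsets of (0,∞)); in particular, this set is dense in (0,∞). -/
open Set Topology

section Flow

variable {X : Type*} {f : ℝ → X → X}

theorem flow_iterate (hf0 : ∀ x, f 0 x = x) (hfadd : ∀ s t x, f (s + t) x = f s (f t x))
    (τ : ℝ) (k : ℕ) (x : X) : (f τ)^[k] x = f (k * τ) x := by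
  induction k with
  | zero => simp [hf0]
  | succ k ih =>
    rw [Function.iterate_succ_apply', ih, ← hfadd]
    congr 1
    push_cast
    ring

/-- The positive times `τ` whose time-`τ` map carries a point of `U` into `V` in at least one
step. -/
def hittingSteps (f : ℝ → X → X) (U V : Set X) : Set ℝ :=
  {τ | 0 < τ ∧ ∃ k : ℕ, 1 ≤ k ∧ ∃ x ∈ U, f (k * τ) x ∈ V}

theorem Ioi_subset_closure_hittingSteps {U V : Set X}
    (h : ∀ T : ℝ, ∃ t, T < t ∧ ∃ x ∈ U, f t x ∈ V) :
    Ioi 0 ⊆ closure (hittingSteps f U V) := by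
  intro a (ha : 0 < a)
  rw [Metric.mem_closure_iff]
  intro ε hε
  obtain ⟨t, ht, x, hx, hxV⟩ := h ((a / ε + 1) * a)
  have hlt : a / ε + 1 < t / a := (lt_div_iff₀ ha).2 ht
  have hpos : 0 < a / ε := div_pos ha hε
  set k : ℕ := ⌊t / a⌋₊
  have hk_le : (k : ℝ) ≤ t / a := Nat.floor_le (by linarith)
  have hk_lt : t / a < k + 1 := Nat.lt_floor_add_one _
  have hk : a / ε < k := by linarith
  have hk0 : (0 : ℝ) < k := hpos.trans hk
  have hka : k * a ≤ t := (le_div_iff₀ ha).1 hk_le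
  have htk : t < (k + 1) * a := (div_lt_iff₀ ha).1 hk_lt
  have hεk : a < k * ε := (div_lt_iff₀ hε).1 hk
  have ha_le : a ≤ t / k := (le_div_iff₀ hk0).2 (by linarith)
  refine ⟨t / k, ⟨by linarith, k, by exact_mod_cast hk0, x, hx, ?_⟩, ?_⟩
  · rwa [mul_div_cancel₀ _ hk0.ne']
  · have : t / k < a + ε := (div_lt_iff₀ hk0).2 (by linarith)
    rw [dist_comm, Real.dist_eq, abs_of_nonneg (by linarith)]
    linarith

variable [TopologicalSpace X]

theorem isOpen_hittingSteps (hcont : Continuous fun p : ℝ × X => f p.1 p.2) (U : Set X)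
    {V : Set X} (hV : IsOpen V) : IsOpen (hittingSteps f U V) := by
  have h : hittingSteps f U V =
      Ioi 0 ∩ ⋃ (k : ℕ) (_ : 1 ≤ k) (x ∈ U), (fun τ : ℝ => f (k * τ) x) ⁻¹' V := by
    ext τ
    simp [hittingSteps]
  rw [h]
  refine isOpen_Ioi.inter (isOpen_iUnion fun k => isOpen_iUnion fun _ => isOpen_iUnion fun x =>
    isOpen_iUnion fun _ => hV.preimage ?_)
  exact hcont.comp (by fun_prop : Continuous fun τ : ℝ => ((k : ℝ) * τ, x))

/-- A transitive flow carries `U` into `V` at arbitrarily large times. -/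
theorem exists_large_hitting_time (hcont : Continuous fun p : ℝ × X => f p.1 p.2)
    (hf0 : ∀ x, f 0 x = x) (hfadd : ∀ s t x, f (s + t) x = f s (f t x))
    (htrans : ∀ U V : Set X, IsOpen U → IsOpen V → U.Nonempty → V.Nonempty →
      ∃ t : ℝ, 0 < t ∧ (f t '' U ∩ V).Nonempty)
    {U V : Set X} (hU : IsOpen U) (hV : IsOpen V) (hUne : U.Nonempty) (hVne : V.Nonempty)
    (T : ℝ) : ∃ t, T < t ∧ ∃ x ∈ U, f t x ∈ V := by
  have hfT : Continuous (f T) := hcont.comp (by fun_prop : Continuous fun x : X => (T, x))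
  have hne : (f T ⁻¹' V).Nonempty := by
    obtain ⟨v, hv⟩ := hVne
    refine ⟨f (-T) v, ?_⟩
    rwa [mem_preimage, ← hfadd, add_neg_cancel, hf0]
  obtain ⟨t, ht, _, ⟨x, hx, rfl⟩, hxV⟩ := htrans U _ hU (hV.preimage hfT) hUne hne
  exact ⟨T + t, by linarith, x, hx, by rwa [hfadd]⟩

end Flow

/-- Baire category theorem in `(0, ∞)`. -/
theorem Ioi_subset_closure_iInter {A : ℕ → Set ℝ} (hA : ∀ n, IsOpen (A n))
    (hd : ∀ n, Ioi (0 : ℝ) ⊆ closure (A n)) : Ioi (0 : ℝ) ⊆ closure (Ioi 0 ∩ ⋂ n, A n) := by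
  have hdense : Dense (⋂ n, (A n ∪ Iio 0)) := by
    refine dense_iInter_of_isOpen_nat (fun n => (hA n).union isOpen_Iio) fun n x => ?_
    rw [closure_union, closure_Iio]
    rcases lt_or_ge 0 x with hx | hx
    · exact Or.inl (hd n hx)
    · exact Or.inr hx
  refine (hdense.open_subset_closure_inter isOpen_Ioi).trans (closure_mono ?_)
  rintro x ⟨hx, hxA⟩
  refine ⟨hx, mem_iInter.2 fun n => ?_⟩
  exact (mem_iInter.1 hxA n).resolve_right (notMem_Iio.2 (le_of_lt hx))

/-- If a continuous flow on a compact metric space is topologically transitive, then the set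
of `τ ∈ (0,∞)` for which the time-`τ` map is topologically transitive contains a countable
intersection of open dense subsets of `(0,∞)`; in particular it is dense in `(0,∞)`. -/
theorem stmt1 {X : Type*} [MetricSpace X] [CompactSpace X]
    (f : ℝ → X → X)
    (hcont : Continuous fun p : ℝ × X => f p.1 p.2)
    (hf0 : ∀ x, f 0 x = x)
    (hfadd : ∀ s t x, f (s + t) x = f s (f t x))
    (htrans : ∀ U V : Set X, IsOpen U → IsOpen V → U.Nonempty → V.Nonempty →
      ∃ t : ℝ, 0 < t ∧ (f t '' U ∩ V).Nonempty) :
    (∃ A : ℕ → Set ℝ,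
      (∀ n, IsOpen (A n)) ∧ (∀ n, A n ⊆ Set.Ioi 0) ∧
      (∀ n, Set.Ioi (0:ℝ) ⊆ closure (A n)) ∧
      (⋂ n, A n) ⊆ {τ : ℝ | ∀ U V : Set X, IsOpen U → IsOpen V → U.Nonempty → V.Nonempty →
        ∃ k : ℕ, 1 ≤ k ∧ ((f τ)^[k] '' U ∩ V).Nonempty}) ∧
    Set.Ioi (0:ℝ) ⊆ closure {τ : ℝ | τ ∈ Set.Ioi (0:ℝ) ∧
      ∀ U V : Set X, IsOpen U → IsOpen V → U.Nonempty → V.Nonempty →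
        ∃ k : ℕ, 1 ≤ k ∧ ((f τ)^[k] '' U ∩ V).Nonempty} := by
  obtain ⟨A, hA⟩ := (((TopologicalSpace.countable_countableBasis X).image2
    (TopologicalSpace.countable_countableBasis X) (hittingSteps f)).insert
      (Set.Ioi 0)).exists_eq_range (insert_nonempty _ _)
  have hA_cases : ∀ n, A n = Ioi 0 ∨ ∃ U ∈ TopologicalSpace.countableBasis X,
      ∃ V ∈ TopologicalSpace.countableBasis X, hittingSteps f U V = A n := fun n =>
    hA.symm.subset (mem_range_self n)
  have hopen : ∀ n, IsOpen (A n) := by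
    intro n
    rcases hA_cases n with h | ⟨U, -, V, hV, h⟩
    · exact h ▸ isOpen_Ioi
    · exact h ▸ isOpen_hittingSteps hcont U (TopologicalSpace.isOpen_of_mem_countableBasis hV)
  have hpos : ∀ n, A n ⊆ Ioi 0 := by
    intro n
    rcases hA_cases n with h | ⟨U, -, V, -, h⟩
    · exact h.subset
    · exact h ▸ fun τ hτ => hτ.1
  have hdense : ∀ n, Ioi (0 : ℝ) ⊆ closure (A n) := by
    intro n
    rcases hA_cases n with h | ⟨U, hU, V, hV, h⟩
    · exact h ▸ subset_closure
    · exact h ▸ Ioi_subset_closure_hittingSteps (exists_large_hitting_time hcont hf0 hfadd htrans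
        (TopologicalSpace.isOpen_of_mem_countableBasis hU)
        (TopologicalSpace.isOpen_of_mem_countableBasis hV)
        (TopologicalSpace.nonempty_of_mem_countableBasis hU)
        (TopologicalSpace.nonempty_of_mem_countableBasis hV))
  have hsub : (⋂ n, A n) ⊆ {τ : ℝ | ∀ U V : Set X, IsOpen U → IsOpen V → U.Nonempty →
      V.Nonempty → ∃ k : ℕ, 1 ≤ k ∧ ((f τ)^[k] '' U ∩ V).Nonempty} := by
    rintro τ hτ U V hU hV ⟨u, hu⟩ ⟨v, hv⟩
    have hB := TopologicalSpace.isBasis_countableBasis X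
    obtain ⟨U', hU', -, hUU⟩ := hB.exists_subset_of_mem_open hu hU
    obtain ⟨V', hV', -, hVV⟩ := hB.exists_subset_of_mem_open hv hV
    obtain ⟨n, hn⟩ := hA.subset (Or.inr ⟨U', hU', V', hV', rfl⟩)
    obtain ⟨-, k, hk, x, hx, hxV⟩ : τ ∈ hittingSteps f U' V' := hn ▸ mem_iInter.1 hτ n
    refine ⟨k, hk, _, mem_image_of_mem _ (hUU hx), ?_⟩
    rw [flow_iterate hf0 hfadd]
    exact hVV hxV
  exact ⟨⟨A, hopen, hpos, hdense, hsub⟩, (Ioi_subset_closure_iInter hopen hdense).trans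
    (closure_mono (inter_subset_inter_right _ hsub))⟩
end

section
/- Let (f_t)_{t∈ℝ} be a continuous flow on a metric space (X,d), let σ > 0, let φ : X → ℝ be a bounded σ-Hölder continuous function, and let P ∈ ℝ. For points u, v ∈ X and s ∈ ℝ satisfying d(f_{τ+s} u, f_τ v) ≤ δ λ^τ for all τ ≥ 0 (for some δ > 0, λ ∈ (0,1)), define ω(u,v;s) = Φ(u,s) − sP + ∫_0^∞ (φ(f_{τ+s} u) − φ(f_τ v)) dτ, where Φ(z,t) = ∫_0^t φ(f_s z) ds. Suppose x, z, y ∈ X, t_1, t_2 ∈ ℝ, δ > 0, λ ∈ (0,1) are such that d(f_{τ+t_1} x, f_τ z) ≤ δ λ^τ, d(f_{τ+t_2} z, f_τ y) ≤ δ λ^τ, and d(f_{τ+t_1+t_2} x, f_τ y) ≤ δ λ^τ for all τ ≥ 0. Then ω satisfies the cocycle relation ω(x,y;t_1+t_2) = ω(x,z;t_1) + ω(z,y;t_2). -/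
open MeasureTheory

open Filter Topology

/-- A real function with a global Hölder bound of positive exponent is continuous. -/
theorem continuous_of_abs_sub_le_mul_dist_rpow {X : Type*} [PseudoMetricSpace X] {φ : X → ℝ}
    {C σ : ℝ} (hσ : 0 < σ) (h : ∀ a b : X, |φ a - φ b| ≤ C * dist a b ^ σ) :
    Continuous φ := by
  rw [continuous_iff_continuousAt]
  intro a
  have hlim : Tendsto (fun b => C * dist b a ^ σ) (𝓝 a) (𝓝 0) := by
    have hc : Continuous fun b => C * dist b a ^ σ :=
      continuous_const.mul ((continuous_id.dist continuous_const).rpow_const fun _ => Or.inr hσ.le)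
    simpa [Real.zero_rpow hσ.ne'] using hc.tendsto a
  exact tendsto_iff_dist_tendsto_zero.2
    (squeeze_zero (fun _ => dist_nonneg) (fun b => h b a) hlim)

/-- A Hölder observable compared along two exponentially asymptotic curves is integrable. -/
theorem integrableOn_sub_of_dist_le_mul_rpow {X : Type*} [PseudoMetricSpace X] {φ : X → ℝ}
    {C σ δ lam : ℝ} (hσ : 0 < σ) (h : ∀ a b : X, |φ a - φ b| ≤ C * dist a b ^ σ)
    (hδ : 0 < δ) (hlam0 : 0 < lam) (hlam1 : lam < 1) {u v : ℝ → X}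
    (hu : Continuous u) (hv : Continuous v)
    (huv : ∀ τ : ℝ, 0 ≤ τ → dist (u τ) (v τ) ≤ δ * lam ^ τ) :
    IntegrableOn (fun τ => φ (u τ) - φ (v τ)) (Set.Ioi 0) := by
  have hφ := continuous_of_abs_sub_le_mul_dist_rpow hσ h
  have hrate : 0 < -(Real.log lam * σ) := by
    have := mul_pos (neg_pos.2 (Real.log_neg hlam0 hlam1)) hσ
    linarith
  have hdom : IntegrableOn (fun τ : ℝ => |C| * δ ^ σ * Real.exp (-(-(Real.log lam * σ)) * τ))
      (Set.Ioi 0) := (exp_neg_integrableOn_Ioi 0 hrate).const_mul _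
  refine hdom.mono' ((hφ.comp hu).sub (hφ.comp hv)).aestronglyMeasurable ?_
  filter_upwards [ae_restrict_mem measurableSet_Ioi] with τ hτ
  calc ‖φ (u τ) - φ (v τ)‖ ≤ C * dist (u τ) (v τ) ^ σ := h _ _
    _ ≤ |C| * (δ * lam ^ τ) ^ σ := by
        gcongr
        · exact le_abs_self C
        · exact huv τ (le_of_lt hτ)
    _ = |C| * δ ^ σ * Real.exp (-(-(Real.log lam * σ)) * τ) := by
        rw [Real.mul_rpow hδ.le (Real.rpow_nonneg hlam0.le _), ← Real.rpow_mul hlam0.le,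
          Real.rpow_def_of_pos hlam0]
        ring_nf

/-- The finite part plus the improper integral is the limit of differences of Birkhoff integrals. -/
theorem tendsto_intervalIntegral_sub_intervalIntegral {a b : ℝ → ℝ} (ha : Continuous a)
    (hb : Continuous b) (t : ℝ)
    (hab : IntegrableOn (fun τ => a (τ + t) - b τ) (Set.Ioi 0)) :
    Tendsto (fun T => (∫ s in (0:ℝ)..(T + t), a s) - ∫ s in (0:ℝ)..T, b s) atTop
      (𝓝 ((∫ s in (0:ℝ)..t, a s) + ∫ τ in Set.Ioi (0:ℝ), (a (τ + t) - b τ))) := by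
  refine ((intervalIntegral_tendsto_integral_Ioi 0 hab tendsto_id).const_add
    (∫ s in (0:ℝ)..t, a s)).congr fun T => ?_
  have hat : Continuous fun τ => a (τ + t) := by fun_prop
  rw [id, intervalIntegral.integral_sub (hat.intervalIntegrable _ _) (hb.intervalIntegrable _ _),
    intervalIntegral.integral_comp_add_right, zero_add, ← add_sub_assoc,
    intervalIntegral.integral_add_adjacent_intervals (ha.intervalIntegrable _ _)
      (ha.intervalIntegrable _ _)]

/-- Cocycle relation for `ω(u,v;s) = Φ(u,s) − sP + ∫_0^∞ (φ(f_{τ+s} u) − φ(f_τ v)) dτ`: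
if the orbit of `x` (shifted by `t₁`) tracks that of `z`, the orbit of `z` (shifted by `t₂`)
tracks that of `y`, and the orbit of `x` (shifted by `t₁+t₂`) tracks that of `y`, all
exponentially, then `ω(x,y;t₁+t₂) = ω(x,z;t₁) + ω(z,y;t₂)`. -/
theorem stmt11 {X : Type*} [MetricSpace X]
    (f : ℝ → X → X)
    (hcont : Continuous fun p : ℝ × X => f p.1 p.2)
    (hf0 : ∀ x, f 0 x = x)
    (hfadd : ∀ s t x, f (s + t) x = f s (f t x))
    (σ : ℝ) (hσ : 0 < σ) (φ : X → ℝ) (C Cb : ℝ)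
    (hHolder : ∀ a b : X, |φ a - φ b| ≤ C * dist a b ^ σ)
    (hbdd : ∀ z, |φ z| ≤ Cb)
    (P : ℝ) (x z y : X) (t1 t2 δ lam : ℝ)
    (hδ : 0 < δ) (hlam0 : 0 < lam) (hlam1 : lam < 1)
    (hxz : ∀ τ : ℝ, 0 ≤ τ → dist (f (τ + t1) x) (f τ z) ≤ δ * lam ^ τ)
    (hzy : ∀ τ : ℝ, 0 ≤ τ → dist (f (τ + t2) z) (f τ y) ≤ δ * lam ^ τ)
    (hxy : ∀ τ : ℝ, 0 ≤ τ → dist (f (τ + (t1 + t2)) x) (f τ y) ≤ δ * lam ^ τ) :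
    ((∫ s in (0:ℝ)..(t1 + t2), φ (f s x)) - (t1 + t2) * P +
        ∫ τ in Set.Ioi (0:ℝ), (φ (f (τ + (t1 + t2)) x) - φ (f τ y))) =
      ((∫ s in (0:ℝ)..t1, φ (f s x)) - t1 * P +
        ∫ τ in Set.Ioi (0:ℝ), (φ (f (τ + t1) x) - φ (f τ z))) +
      ((∫ s in (0:ℝ)..t2, φ (f s z)) - t2 * P +
        ∫ τ in Set.Ioi (0:ℝ), (φ (f (τ + t2) z) - φ (f τ y))) := by
  have hφ := continuous_of_abs_sub_le_mul_dist_rpow hσ hHolder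
  have horbit : ∀ w, Continuous fun s => f s w := fun w =>
    hcont.comp (continuous_id.prodMk continuous_const)
  have hlim : ∀ (u v : X) (t : ℝ),
      (∀ τ : ℝ, 0 ≤ τ → dist (f (τ + t) u) (f τ v) ≤ δ * lam ^ τ) →
      Tendsto (fun T => (∫ s in (0:ℝ)..(T + t), φ (f s u)) - ∫ s in (0:ℝ)..T, φ (f s v)) atTop
        (𝓝 ((∫ s in (0:ℝ)..t, φ (f s u)) +
          ∫ τ in Set.Ioi (0:ℝ), (φ (f (τ + t) u) - φ (f τ v)))) := fun u v t huv =>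
    tendsto_intervalIntegral_sub_intervalIntegral (hφ.comp (horbit u)) (hφ.comp (horbit v)) t
      (integrableOn_sub_of_dist_le_mul_rpow hσ hHolder hδ hlam0 hlam1
        ((horbit u).comp (continuous_add_const t)) (horbit v) huv)
  have hsum := ((hlim x z t1 hxz).comp (tendsto_atTop_add_const_right atTop t2 tendsto_id)).add
    (hlim z y t2 hzy)
  have heq := tendsto_nhds_unique (hlim x y (t1 + t2) hxy) (hsum.congr fun T => by
    simp only [Function.comp_apply, id, sub_add_sub_cancel]
    rw [add_assoc, add_comm t2 t1])
  linarith
end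

section
/- Let (f_t)_{t∈ℝ} be a continuous flow on a compact metric space (X,d), φ : X → ℝ a continuous function, α ∈ ℝ, and Φ(y,t) = ∫_0^t φ(f_s y) ds. For r > 0 define the continuous-time Carathéodory set function m^F_r(Z) = sup_{T>0} inf { Σ_{(y,t)∈E} e^{Φ(y,t) − tα} : E ⊆ X × [T,∞) finite or countable, Z ⊆ ⋃_{(y,t)∈E} B_t(y,r) }, where B_t(y,r) is the flow Bowen ball; for τ > 0 and ρ > 0 define the discrete-time set function m^{τ,ρ}(Z) = sup_{N∈ℕ} inf { Σ_{(y,n)∈E} e^{Φ(y,nτ) − nτα} : E ⊆ X × {n ∈ ℕ : n ≥ N} finite or countable, Z ⊆ ⋃_{(y,n)∈E} B_n^{f_τ}(y,ρ) }, where B_n^{f_τ}(y,ρ) is the Bowen ball of the time-τ map. If ρ > 0 is such that d(y,z) < ρ implies d(f_t y, f_t z) < r for all t ∈ [0,τ], then m^F_r(Z) ≤ m^{τ,ρ}(Z) for every Z ⊆ X. -/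
open scoped ENNReal

noncomputable section

/-- The Bowen ball of a flow: points whose orbit stays `r`-close to that of `y` for all
times in `[0,t]`. -/
def flowBowen {X : Type*} [MetricSpace X] (f : ℝ → X → X) (r : ℝ) (y : X) (t : ℝ) :
    Set X :=
  {z | ∀ s ∈ Set.Icc (0:ℝ) t, dist (f s y) (f s z) < r}

/-- The Bowen ball of a map: points whose first `n` iterates stay `r`-close to those
of `y`. -/
def mapBowen {X : Type*} (g : X → X) [MetricSpace X] (r : ℝ) (y : X) (n : ℕ) : Set X :=
  {z | ∀ k < n, dist (g^[k] y) (g^[k] z) < r}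

/-- The Birkhoff integral `Φ(y,t) = ∫_0^t φ(f_s y) ds` of `φ` along the flow `f`. -/
def birkhoff {X : Type*} (f : ℝ → X → X) (φ : X → ℝ) (y : X) (t : ℝ) : ℝ :=
  ∫ s in (0:ℝ)..t, φ (f s y)

/-- The continuous-time Carathéodory set function defined via flow Bowen balls of radius
`r` with weights `e^{Φ(y,t) − tα}`. -/
def mFlow {X : Type*} [MetricSpace X] (f : ℝ → X → X) (φ : X → ℝ) (α r : ℝ)
    (Z : Set X) : ℝ≥0∞ :=
  ⨆ (T : ℝ) (_ : 0 < T),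
    ⨅ (E : Set (X × ℝ)) (_ : E.Countable) (_ : ∀ p ∈ E, T ≤ p.2)
      (_ : Z ⊆ ⋃ p ∈ E, flowBowen f r p.1 p.2),
      ∑' p : E, ENNReal.ofReal (Real.exp (birkhoff f φ p.1.1 p.1.2 - p.1.2 * α))

/-- The discrete-time Carathéodory set function defined via Bowen balls of the time-`τ`
map with radius `ρ` and weights `e^{Φ(y,nτ) − nτα}`. -/
def mMap {X : Type*} [MetricSpace X] (f : ℝ → X → X) (φ : X → ℝ) (α τ ρ : ℝ)
    (Z : Set X) : ℝ≥0∞ :=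
  ⨆ N : ℕ,
    ⨅ (E : Set (X × ℕ)) (_ : E.Countable) (_ : ∀ p ∈ E, N ≤ p.2)
      (_ : Z ⊆ ⋃ p ∈ E, mapBowen (f τ) ρ p.1 p.2),
      ∑' p : E, ENNReal.ofReal
        (Real.exp (birkhoff f φ p.1.1 ((p.1.2 : ℝ) * τ) - (p.1.2 : ℝ) * τ * α))

end

/-- The iterates of the time-`τ` map of a flow are its time-`kτ` maps. -/
theorem iterate_flow_eq {X : Type*} {f : ℝ → X → X} (hf0 : ∀ x, f 0 x = x)
    (hfadd : ∀ s t x, f (s + t) x = f s (f t x)) (τ : ℝ) (k : ℕ) (x : X) :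
    (f τ)^[k] x = f (k * τ) x := by
  induction k with
  | zero => simp [hf0]
  | succ k ih =>
    rw [Function.iterate_succ_apply', ih, ← hfadd]
    congr 1
    push_cast
    ring

/-- A time in `[0,nτ]` lies in one of the `n` intervals `[kτ,(k+1)τ]`, `k < n`. -/
theorem exists_nat_lt_sub_mul_mem_Icc {τ s : ℝ} {n : ℕ} (hn : 1 ≤ n)
    (hs : s ∈ Set.Icc (0:ℝ) (n * τ)) :
    ∃ k < n, s - k * τ ∈ Set.Icc (0:ℝ) τ := by
  induction n, hn using Nat.le_induction with
  | base => exact ⟨0, one_pos, by simpa using hs⟩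
  | succ m _ ih =>
    rcases le_total s (m * τ) with h | h
    · obtain ⟨k, hk, hmem⟩ := ih ⟨hs.1, h⟩
      exact ⟨k, hk.trans m.lt_succ_self, hmem⟩
    · refine ⟨m, m.lt_succ_self, sub_nonneg.2 h, ?_⟩
      have := hs.2
      push_cast at this
      linarith

/-- If `ρ`-closeness implies `r`-closeness for all times in `[0,τ]`, then the `ρ`-Bowen ball of
order `n ≥ 1` of the time-`τ` map is contained in the flow `r`-Bowen ball of order `nτ`. -/
theorem mapBowen_subset_flowBowen {X : Type*} [MetricSpace X] {f : ℝ → X → X}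
    (hf0 : ∀ x, f 0 x = x) (hfadd : ∀ s t x, f (s + t) x = f s (f t x))
    {r τ ρ : ℝ}
    (hρr : ∀ y z : X, dist y z < ρ → ∀ t ∈ Set.Icc (0:ℝ) τ, dist (f t y) (f t z) < r)
    (y : X) {n : ℕ} (hn : 1 ≤ n) :
    mapBowen (f τ) ρ y n ⊆ flowBowen f r y (n * τ) := by
  intro z hz s hs
  obtain ⟨k, hk, hmem⟩ := exists_nat_lt_sub_mul_mem_Icc hn hs
  have h := hρr _ _ (hz k hk) _ hmem
  simpa only [iterate_flow_eq hf0 hfadd, ← hfadd, sub_add_cancel] using h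

/-- If `ρ`-closeness implies `r`-closeness along the flow for all times in `[0,τ]`, then the
continuous-time Carathéodory set function at radius `r` is bounded above by the
discrete-time one of the time-`τ` map at radius `ρ`. -/
theorem stmt13 {X : Type*} [MetricSpace X] [CompactSpace X]
    (f : ℝ → X → X)
    (hcont : Continuous fun p : ℝ × X => f p.1 p.2)
    (hf0 : ∀ x, f 0 x = x)
    (hfadd : ∀ s t x, f (s + t) x = f s (f t x))
    (φ : X → ℝ) (hφ : Continuous φ) (α : ℝ)
    (r τ ρ : ℝ) (hr : 0 < r) (hτ : 0 < τ) (hρ : 0 < ρ)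
    (hρr : ∀ y z : X, dist y z < ρ → ∀ t ∈ Set.Icc (0:ℝ) τ, dist (f t y) (f t z) < r) :
    ∀ Z : Set X, mFlow f φ α r Z ≤ mMap f φ α τ ρ Z := by
  intro Z
  refine iSup₂_le fun T _ => ?_
  obtain ⟨N, hN⟩ := exists_nat_ge (T / τ)
  refine le_trans ?_ (le_iSup _ (N + 1))
  refine le_iInf fun E => le_iInf fun hE => le_iInf fun hEN => le_iInf fun hZ => ?_
  let g : X × ℕ → X × ℝ := fun p => (p.1, p.2 * τ)
  have hg : Function.Injective g := by
    rintro ⟨y, n⟩ ⟨z, m⟩ h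
    simpa [g, hτ.ne'] using h
  have htsum := tsum_image (fun p : X × ℝ =>
    ENNReal.ofReal (Real.exp (birkhoff f φ p.1 p.2 - p.2 * α))) (hg.injOn (s := E))
  refine iInf_le_of_le (g '' E) ?_
  refine iInf_le_of_le (hE.image g) (iInf_le_of_le ?_ (iInf_le_of_le ?_ htsum.le))
  · rintro _ ⟨p, hp, rfl⟩
    have hNp : (N : ℝ) ≤ p.2 := by exact_mod_cast (Nat.le_succ N).trans (hEN p hp)
    exact (div_le_iff₀ hτ).1 (hN.trans hNp)
  · rw [Set.biUnion_image]
    exact hZ.trans <| Set.iUnion₂_mono fun p hp =>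
      mapBowen_subset_flowBowen hf0 hfadd hρr p.1 ((Nat.le_add_left 1 N).trans (hEN p hp))
end
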